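/- For every integer n ≥ 0, 3·A_3(n) = σ(3n+2), where σ(m) denotes the sum of the positive divisors of m. -/

import Mathlib

/-- The hook length of the cell `(i, j)` in a Young diagram `μ`:
arm length + leg length + 1. -/
def YoungDiagram.hookLength (μ : YoungDiagram) (i j : ℕ) : ℕ :=
  μ.rowLen i + μ.colLen j - i - j - 1

/-- A Young diagram (equivalently, a partition) is a 3-core if none of its
hook numbers is divisible by 3. -/
def YoungDiagram.IsThreeCore (μ : YoungDiagram) : Prop :=
  ∀ c ∈ μ.cells, ¬ (3 ∣ μ.hookLength c.1 c.2)

/-- `a3 n` is the number of 3-core partitions of `n`. -/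
noncomputable def a3 (n : ℕ) : ℕ :=
  Nat.card {μ : YoungDiagram // μ.card = n ∧ μ.IsThreeCore}

/-- `A3 n` is the number of partition pairs of `n` in which each partition is a 3-core. -/
noncomputable def A3 (n : ℕ) : ℕ :=
  Nat.card {p : YoungDiagram × YoungDiagram //
    p.1.card + p.2.card = n ∧ p.1.IsThreeCore ∧ p.2.IsThreeCore}

/-- `B3 n` is the number of partition triples of `n` in which each partition is a 3-core. -/
noncomputable def B3 (n : ℕ) : ℕ :=
  Nat.card {p : YoungDiagram × YoungDiagram × YoungDiagram //
    p.1.card + p.2.1.card + p.2.2.card = n ∧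
    p.1.IsThreeCore ∧ p.2.1.IsThreeCore ∧ p.2.2.IsThreeCore}

/-!
The hook lengths in the first column of a partition determine it, and they identify the 3-cores
with the finite sets of positive integers closed under subtraction of `3`. Such a set is given by
the numbers `p`, `q` of its elements in the classes `1`, `2` modulo `3`, and the 3-core then has
size `n = p² + q² + q - pq`. Equivalently, `3n + 1` is the norm of an Eisenstein integer in a fixed
sector, so by unique factorisation the number of 3-cores of `n` is `∑ χ(d)` over `d ∣ 3n + 1`,
where `χ` is the nontrivial character modulo `3`.

The divisor sum of `χ` vanishes on the class `2` modulo `3`, so the number of pairs of 3-cores is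
the sum of `χ(a) χ(b)` over all solutions of `ax + by = 3n + 2` in positive integers. As
`χ(a) χ(b)` is the difference of the indicators of `3 ∣ a - b` and `3 ∣ a + b`, Liouville's
identity for even functions turns it into a sum over the divisors of `3n + 2`.
-/

open Finset

/-! ### Liouville's identity -/

section LiouvilleIdentity

variable {R : Type*}

/-- The quadruples `((a, x), (b, y))` of positive integers with `a * x + b * y = m`. -/
def bilinearReps (m : ℕ) : Finset ((ℕ × ℕ) × ℕ × ℕ) :=
  (antidiagonal m).biUnion fun k => k.1.divisorsAntidiagonal ×ˢ k.2.divisorsAntidiagonal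

lemma mem_bilinearReps {m a x b y : ℕ} :
    ((a, x), (b, y)) ∈ bilinearReps m ↔
      0 < a ∧ 0 < x ∧ 0 < b ∧ 0 < y ∧ a * x + b * y = m := by
  simp only [bilinearReps, mem_biUnion, HasAntidiagonal.mem_antidiagonal, mem_product,
    Nat.mem_divisorsAntidiagonal, Prod.exists]
  constructor
  · rintro ⟨_, _, hm, ⟨rfl, hax⟩, rfl, hby⟩
    simp only [ne_eq, mul_eq_zero, not_or] at hax hby
    exact ⟨by lia, by lia, by lia, by lia, hm⟩
  · rintro ⟨ha, hx, hb, hy, hm⟩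
    exact ⟨_, _, hm, ⟨rfl, by positivity⟩, rfl, by positivity⟩

lemma sum_bilinearReps [AddCommMonoid R] (m : ℕ) (g : (ℕ × ℕ) × ℕ × ℕ → R) :
    ∑ t ∈ bilinearReps m, g t = ∑ k ∈ antidiagonal m,
      ∑ t ∈ k.1.divisorsAntidiagonal ×ˢ k.2.divisorsAntidiagonal, g t := by
  refine sum_biUnion fun k _ l _ hkl => disjoint_left.2 ?_
  rintro ⟨⟨a, x⟩, b, y⟩ hk hl
  simp only [mem_product, Nat.mem_divisorsAntidiagonal] at hk hl
  exact hkl (Prod.ext (hk.1.1.symm.trans hl.1.1) (hk.2.1.symm.trans hl.2.1))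

lemma sum_bilinearReps_swap [AddCommMonoid R] (m : ℕ) (P : (ℕ × ℕ) × ℕ × ℕ → Prop)
    [DecidablePred P] (g : (ℕ × ℕ) × ℕ × ℕ → R) :
    ∑ t ∈ bilinearReps m with P t, g t = ∑ t ∈ bilinearReps m with P t.swap, g t.swap := by
  refine sum_nbij' Prod.swap Prod.swap ?_ ?_ (fun _ _ => rfl) (fun _ _ => rfl) fun _ _ => rfl
  all_goals
    rintro ⟨⟨a, x⟩, b, y⟩ ht
    simp only [mem_filter, Prod.swap_prod_mk, mem_bilinearReps, add_comm (b * y)] at ht ⊢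
    tauto

lemma sum_bilinearReps_fst_eq [AddCommMonoid R] (m : ℕ) (g : ℕ → R) :
    ∑ t ∈ bilinearReps m with t.1.1 = t.2.1, g t.1.1
      = ∑ t ∈ bilinearReps m with t.1.2 = t.2.2, g t.1.2 := by
  refine sum_nbij' (Prod.map Prod.swap Prod.swap) (Prod.map Prod.swap Prod.swap) ?_ ?_
    (fun _ _ => rfl) (fun _ _ => rfl) fun _ _ => rfl
  all_goals
    rintro ⟨⟨a, x⟩, b, y⟩ ht
    simp only [mem_filter, Prod.map_apply, Prod.swap_prod_mk, mem_bilinearReps,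
      mul_comm x, mul_comm y] at ht ⊢
    tauto

-- The shear is `a * x + b * y = (a - b) * x + b * (x + y)`.
lemma sum_bilinearReps_shear [AddCommMonoid R] (m : ℕ) (g : ℕ → ℕ → R) :
    ∑ t ∈ bilinearReps m with t.2.1 < t.1.1, g t.1.1 t.2.1
      = ∑ t ∈ bilinearReps m with t.1.2 < t.2.2, g (t.1.1 + t.2.1) t.2.1 := by
  refine sum_nbij' (fun t => ((t.1.1 - t.2.1, t.1.2), (t.2.1, t.1.2 + t.2.2)))
    (fun t => ((t.1.1 + t.2.1, t.1.2), (t.2.1, t.2.2 - t.1.2))) ?_ ?_ ?_ ?_ ?_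
  all_goals
    rintro ⟨⟨a, x⟩, b, y⟩ ht
    simp only [mem_filter, mem_bilinearReps] at ht
    obtain ⟨⟨ha, hx, hb, hy, rfl⟩, hlt⟩ := ht
    obtain ⟨c, rfl⟩ := Nat.exists_eq_add_of_lt hlt
    simp only [mem_filter, mem_bilinearReps, add_assoc, add_tsub_cancel_left]
  · exact ⟨⟨by lia, hx, hb, by lia, by ring⟩, by lia⟩
  · exact ⟨⟨by lia, hx, hb, by lia, by ring⟩, by lia⟩
  · simp only [add_comm b, add_assoc]
  · simp only [add_tsub_cancel_right]
  · congr 1; lia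

lemma sum_bilinearReps_snd_eq [AddCommMonoid R] (m : ℕ) (g : ℕ → ℕ → ℕ → R) :
    ∑ t ∈ bilinearReps m with t.1.2 = t.2.2, g t.1.1 t.2.1 t.1.2
      = ∑ d ∈ m.divisors, ∑ a ∈ Ico 1 d, g a (d - a) (m / d) := by
  rw [sum_sigma']
  refine sum_nbij' (fun t => ⟨t.1.1 + t.2.1, t.1.1⟩)
    (fun s => ((s.2, m / s.1), (s.1 - s.2, m / s.1))) ?_ ?_ ?_ ?_ ?_
  · rintro ⟨⟨a, x⟩, b, y⟩ ht
    simp only [mem_filter, mem_bilinearReps] at ht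
    obtain ⟨⟨ha, hx, hb, -, rfl⟩, rfl⟩ := ht
    simp only [mem_sigma, Nat.mem_divisors, mem_Ico]
    exact ⟨⟨⟨x, by ring⟩, by positivity⟩, by lia, by lia⟩
  · rintro ⟨d, a⟩ hs
    simp only [mem_sigma, Nat.mem_divisors, mem_Ico] at hs
    obtain ⟨⟨⟨e, rfl⟩, hde⟩, ha, had⟩ := hs
    have hd : 0 < d := by lia
    have he : 0 < e := Nat.pos_of_ne_zero (right_ne_zero_of_mul hde)
    simp only [mem_filter, mem_bilinearReps, Nat.mul_div_cancel_left _ hd, ← add_mul,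
      Nat.add_sub_cancel' had.le, and_true]
    exact ⟨by lia, he, by lia, he⟩
  · rintro ⟨⟨a, x⟩, b, y⟩ ht
    simp only [mem_filter, mem_bilinearReps] at ht
    obtain ⟨⟨ha, -, -, -, rfl⟩, rfl⟩ := ht
    simp only [← add_mul, Nat.mul_div_cancel_left _ (Nat.add_pos_left ha b),
      add_tsub_cancel_left]
  · rintro ⟨d, a⟩ hs
    simp only [mem_sigma, mem_Ico] at hs
    simp only [Nat.add_sub_cancel' hs.2.2.le]
  · rintro ⟨⟨a, x⟩, b, y⟩ ht
    simp only [mem_filter, mem_bilinearReps] at ht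
    obtain ⟨⟨ha, -, -, -, rfl⟩, rfl⟩ := ht
    simp only [← add_mul, Nat.mul_div_cancel_left _ (Nat.add_pos_left ha b),
      add_tsub_cancel_left]

lemma sum_eq_sum_filter_lt_add_eq_add_gt {ι α : Type*} [AddCommMonoid R] [LinearOrder α]
    (s : Finset ι) (u v : ι → α) (g : ι → R) :
    ∑ t ∈ s, g t = ∑ t ∈ s with u t < v t, g t + ∑ t ∈ s with u t = v t, g t
      + ∑ t ∈ s with v t < u t, g t := by
  simp only [sum_filter, ← sum_add_distrib]
  refine sum_congr rfl fun t _ => ?_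
  rcases lt_trichotomy (u t) (v t) with h | h | h
  · simp [h, h.ne, h.not_gt]
  · simp [h]
  · simp [h, h.ne', h.not_gt]

variable [CommRing R] {f : ℤ → R}

lemma sum_bilinearReps_snd_eq_const (m : ℕ) (g : ℕ → R) :
    ∑ t ∈ bilinearReps m with t.1.2 = t.2.2, g t.1.2
      = ∑ d ∈ m.divisors, (d - 1) * g (m / d) := by
  rw [sum_bilinearReps_snd_eq m fun _ _ x => g x]
  refine sum_congr rfl fun d hd => ?_
  rw [sum_const, Nat.card_Ico, nsmul_eq_mul, Nat.cast_pred (Nat.pos_of_mem_divisors hd)]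

lemma sum_bilinearReps_sub (hf : f.Even) (m : ℕ) :
    ∑ t ∈ bilinearReps m, f (t.1.1 - t.2.1)
      = ∑ d ∈ m.divisors, (d - 1) * f 0
        + 2 * ∑ t ∈ bilinearReps m with t.1.2 < t.2.2, f t.1.1 := by
  have hlt : ∑ t ∈ bilinearReps m with t.1.1 < t.2.1, f (t.1.1 - t.2.1)
      = ∑ t ∈ bilinearReps m with t.2.1 < t.1.1, f (t.1.1 - t.2.1) := by
    rw [sum_bilinearReps_swap]
    exact sum_congr rfl fun t _ => by rw [← hf, neg_sub, Prod.fst_swap, Prod.snd_swap]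
  have heq : ∑ t ∈ bilinearReps m with t.1.1 = t.2.1, f (t.1.1 - t.2.1)
      = ∑ d ∈ m.divisors, (d - 1) * f 0 := by
    rw [← sum_bilinearReps_snd_eq_const m fun _ => f 0, ← sum_bilinearReps_fst_eq m fun _ => f 0]
    exact sum_congr rfl fun t ht => by rw [(mem_filter.1 ht).2, sub_self]
  have hgt : ∑ t ∈ bilinearReps m with t.2.1 < t.1.1, f (t.1.1 - t.2.1)
      = ∑ t ∈ bilinearReps m with t.1.2 < t.2.2, f t.1.1 := by
    simpa using sum_bilinearReps_shear m fun a b => f (a - b)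
  rw [sum_eq_sum_filter_lt_add_eq_add_gt _ (·.1.1) (·.2.1), hlt, heq, hgt]
  ring

lemma sum_bilinearReps_add (f : ℤ → R) (m : ℕ) :
    ∑ t ∈ bilinearReps m, f (t.1.1 + t.2.1)
      = ∑ d ∈ m.divisors, (d - 1) * f d
        + 2 * ∑ t ∈ bilinearReps m with t.2.1 < t.1.1, f t.1.1 := by
  have hlt : ∑ t ∈ bilinearReps m with t.1.2 < t.2.2, f (t.1.1 + t.2.1)
      = ∑ t ∈ bilinearReps m with t.2.1 < t.1.1, f t.1.1 := by
    simpa using (sum_bilinearReps_shear m fun a _ => f a).symm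
  have heq : ∑ t ∈ bilinearReps m with t.1.2 = t.2.2, f (t.1.1 + t.2.1)
      = ∑ d ∈ m.divisors, (d - 1) * f d := by
    rw [sum_bilinearReps_snd_eq m fun a b _ => f (a + b)]
    refine sum_congr rfl fun d hd => ?_
    rw [sum_congr rfl fun a ha => by rw [← Nat.cast_add, Nat.add_sub_cancel' (mem_Ico.1 ha).2.le],
      sum_const, Nat.card_Ico, nsmul_eq_mul, Nat.cast_pred (Nat.pos_of_mem_divisors hd)]
  have hgt : ∑ t ∈ bilinearReps m with t.2.2 < t.1.2, f (t.1.1 + t.2.1)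
      = ∑ t ∈ bilinearReps m with t.1.2 < t.2.2, f (t.1.1 + t.2.1) := by
    rw [sum_bilinearReps_swap]
    exact sum_congr rfl fun t _ => by rw [add_comm, Prod.fst_swap, Prod.snd_swap]
  rw [sum_eq_sum_filter_lt_add_eq_add_gt _ (·.1.2) (·.2.2), hgt, hlt, heq]
  ring

theorem liouville_identity (hf : f.Even) (m : ℕ) :
    ∑ t ∈ bilinearReps m, (f (t.1.1 - t.2.1) - f (t.1.1 + t.2.1))
      = ∑ d ∈ m.divisors,
          ((d - 1) * (f 0 - f d + 2 * f ↑(m / d)) - 2 * ∑ a ∈ Ico 1 d, f a) := by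
  -- Both sides of `hsplit` decompose `∑ f a`: by comparing `a` with `b`, and `x` with `y`.
  have hsplit := (sum_eq_sum_filter_lt_add_eq_add_gt (bilinearReps m) (·.1.1) (·.2.1)
    (f ·.1.1)).symm.trans
    (sum_eq_sum_filter_lt_add_eq_add_gt (bilinearReps m) (·.1.2) (·.2.2) (f ·.1.1))
  have hlt : ∑ t ∈ bilinearReps m with t.1.1 < t.2.1, f t.1.1
      = ∑ t ∈ bilinearReps m with t.2.2 < t.1.2, f t.1.1 := by
    rw [sum_bilinearReps_swap, sum_bilinearReps_swap m fun t => t.2.2 < t.1.2]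
    exact sum_bilinearReps_shear m fun _ b => f b
  have hfst : ∑ t ∈ bilinearReps m with t.1.1 = t.2.1, f t.1.1
      = ∑ d ∈ m.divisors, (d - 1) * f ↑(m / d) := by
    rw [sum_bilinearReps_fst_eq m fun a => f a, sum_bilinearReps_snd_eq_const m fun x => f x]
  have hsnd : ∑ t ∈ bilinearReps m with t.1.2 = t.2.2, f t.1.1
      = ∑ d ∈ m.divisors, ∑ a ∈ Ico 1 d, f a :=
    sum_bilinearReps_snd_eq m fun a _ _ => f a
  rw [hlt, hfst, hsnd] at hsplit
  rw [sum_sub_distrib, sum_bilinearReps_sub hf, sum_bilinearReps_add]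
  simp only [mul_add, mul_sub, sum_add_distrib, sum_sub_distrib, mul_left_comm _ (2 : R),
    ← mul_sum]
  linear_combination -2 * hsplit

end LiouvilleIdentity

/-! ### Divisor sums of characters -/

section DivisorCharSum

variable {R : Type*} [CommRing R] {N : ℕ}

lemma filter_not_dvd_divisors_prime_mul {p : ℕ} (hp : p.Prime) (k : ℕ) :
    {d ∈ (p * k).divisors | ¬p ∣ d} = {d ∈ k.divisors | ¬p ∣ d} := by
  ext d
  simp only [mem_filter, Nat.mem_divisors, ne_eq, mul_eq_zero, hp.ne_zero, false_or]
  exact and_congr_left fun hpd => and_congr_left fun _ =>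
    ((Nat.Prime.coprime_iff_not_dvd hp).2 hpd).symm.dvd_mul_left

lemma sum_divisors_prime_mul {M : Type*} [AddCommMonoid M] {p k : ℕ} (hp : p.Prime) (hk : k ≠ 0)
    (f : ℕ → M) :
    ∑ d ∈ (p * k).divisors, f d
      = ∑ d ∈ k.divisors with ¬p ∣ d, f d + ∑ d ∈ k.divisors, f (p * d) := by
  rw [← sum_filter_add_sum_filter_not _ (p ∣ ·), add_comm, filter_not_dvd_divisors_prime_mul hp]
  congr 1
  rw [← sum_image fun a _ b _ => Nat.eq_of_mul_eq_mul_left hp.pos]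
  refine sum_congr (ext fun d => ?_) fun _ _ => rfl
  simp only [mem_filter, Nat.mem_divisors, mem_image]
  constructor
  · rintro ⟨⟨hd, -⟩, d, rfl⟩
    exact ⟨d, ⟨Nat.dvd_of_mul_dvd_mul_left hp.pos hd, hk⟩, rfl⟩
  · rintro ⟨d, ⟨hd, -⟩, rfl⟩
    exact ⟨⟨mul_dvd_mul_left p hd, mul_ne_zero hp.ne_zero hk⟩, dvd_mul_right p d⟩

/-- The divisor sum `∑ χ d` over `d ∣ k` of a Dirichlet character `χ`, that is, the Dirichlet
convolution of `χ` with the constant function `1`. -/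
def divisorCharSum (χ : DirichletCharacter R N) (k : ℕ) : R :=
  ∑ d ∈ k.divisors, χ d

variable (χ : DirichletCharacter R N)

lemma divisorCharSum_one : divisorCharSum χ 1 = 1 := by
  simp [divisorCharSum]

lemma divisorCharSum_prime_mul {p k : ℕ} (hp : p.Prime) (hk : k ≠ 0) :
    divisorCharSum χ (p * k)
      = ∑ d ∈ k.divisors with ¬p ∣ d, χ d + χ p * divisorCharSum χ k := by
  simp only [divisorCharSum, sum_divisors_prime_mul hp hk, Nat.cast_mul, map_mul, mul_sum]

lemma divisorCharSum_prime_mul_of_not_dvd {p k : ℕ} (hp : p.Prime) (hk : k ≠ 0) (hpk : ¬p ∣ k) :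
    divisorCharSum χ (p * k) = (1 + χ p) * divisorCharSum χ k := by
  have hfilter : {d ∈ k.divisors | ¬p ∣ d} = k.divisors :=
    filter_true_of_mem fun d hd hpd => hpk (hpd.trans (Nat.dvd_of_mem_divisors hd))
  rw [divisorCharSum_prime_mul χ hp hk, hfilter, one_add_mul, divisorCharSum]

lemma divisorCharSum_prime_mul_prime_mul {p k : ℕ} (hp : p.Prime) (hk : k ≠ 0) :
    divisorCharSum χ (p * (p * k)) + χ p * divisorCharSum χ k
      = (1 + χ p) * divisorCharSum χ (p * k) := by
  have h := divisorCharSum_prime_mul χ hp hk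
  rw [divisorCharSum_prime_mul χ hp (mul_ne_zero hp.ne_zero hk),
    filter_not_dvd_divisors_prime_mul hp]
  linear_combination -h

lemma sum_bilinearReps_char_mul_char (m : ℕ) :
    ∑ t ∈ bilinearReps m, χ t.1.1 * χ t.2.1
      = ∑ k ∈ antidiagonal m, divisorCharSum χ k.1 * divisorCharSum χ k.2 := by
  rw [sum_bilinearReps]
  refine sum_congr rfl fun k _ => ?_
  rw [sum_product' _ _ fun u v : ℕ × ℕ => χ u.1 * χ v.1, ← sum_mul_sum, divisorCharSum,
    divisorCharSum, Nat.sum_divisorsAntidiagonal fun i _ => χ i,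
    Nat.sum_divisorsAntidiagonal fun i _ => χ i]

end DivisorCharSum

local notation "χ₃" => quadraticChar (ZMod 3)

section CharacterModThree

lemma mod_three_and_quadraticChar_eq {a : ℕ} (ha : ¬3 ∣ a) :
    a % 3 = 1 ∧ χ₃ a = 1 ∨ a % 3 = 2 ∧ χ₃ a = -1 := by
  have hval : χ₃ ((1 : ℕ) : ZMod 3) = 1 ∧ χ₃ ((2 : ℕ) : ZMod 3) = -1 := by decide
  rw [← ZMod.natCast_mod a 3]
  obtain h | h : a % 3 = 1 ∨ a % 3 = 2 := by lia
  · exact .inl ⟨h, by rw [h, hval.1]⟩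
  · exact .inr ⟨h, by rw [h, hval.2]⟩

lemma divisorCharSum_eq_zero_of_mod_three_eq_two {m : ℕ} (hm : m % 3 = 2) :
    divisorCharSum χ₃ m = 0 := by
  have hneg : ∀ u v : ZMod 3, u * v = 2 → χ₃ u + χ₃ v = 0 := by decide
  have hmZ : (m : ZMod 3) = 2 := (ZMod.natCast_eq_natCast_iff' m 2 3).2 hm
  have hdouble : divisorCharSum χ₃ m + divisorCharSum χ₃ m = 0 := by
    nth_rewrite 2 [divisorCharSum]
    rw [← Nat.sum_div_divisors, divisorCharSum, ← sum_add_distrib]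
    refine sum_eq_zero fun d hd => hneg _ _ ?_
    rw [← Nat.cast_mul, Nat.mul_div_cancel' (Nat.dvd_of_mem_divisors hd), hmZ]
  lia

lemma card_filter_three_dvd_Ico {d : ℕ} (hd : ¬3 ∣ d) :
    #{a ∈ Ico 1 d | 3 ∣ a} = d / 3 := by
  rw [← Nat.Ioc_filter_dvd_card_eq_div]
  congr 1
  ext a
  simp only [mem_filter, mem_Ico, mem_Ioc]
  exact and_congr_left fun ha => by
    have : a ≠ d := fun h => hd (h ▸ ha)
    lia

lemma three_mul_sub_count_eq {d : ℕ} (hd : ¬3 ∣ d) :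
    3 * ((d - 1 : ℤ) - 2 * #{a ∈ Ico 1 d | 3 ∣ a}) = d - χ₃ d := by
  rw [card_filter_three_dvd_Ico hd]
  obtain ⟨hmod, hχ⟩ | ⟨hmod, hχ⟩ := mod_three_and_quadraticChar_eq hd <;>
  · rw [hχ]
    lia

theorem three_mul_sum_antidiagonal_divisorCharSum {m : ℕ} (hm : m % 3 = 2) :
    3 * ∑ k ∈ antidiagonal m, divisorCharSum χ₃ k.1 * divisorCharSum χ₃ k.2
      = ∑ d ∈ m.divisors, (d : ℤ) := by
  let f : ℤ → ℤ := fun z => if (z : ZMod 3) = 0 then 1 else 0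
  have hf : f.Even := fun z => by simp [f]
  have hχ : ∀ u v : ZMod 3,
      χ₃ u * χ₃ v = (if u - v = 0 then 1 else 0) - (if u + v = 0 then 1 else 0) := by decide
  have hf_dvd : ∀ a : ℕ, f a = if 3 ∣ a then 1 else 0 := fun a => by
    simp [f, ZMod.natCast_eq_zero_iff]
  have hf_zero : ∀ {d}, d ∣ m → f d = 0 := fun {d} hd => by
    have : ¬3 ∣ d := fun h => by have := h.trans hd; lia
    simp [hf_dvd, this]
  have hterm : ∀ d ∈ m.divisors,
      3 * ((d - 1) * (f 0 - f d + 2 * f ↑(m / d)) - 2 * ∑ a ∈ Ico 1 d, f a) = d - χ₃ d := by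
    intro d hd
    have hdm := Nat.dvd_of_mem_divisors hd
    rw [hf_zero hdm, hf_zero (Nat.div_dvd_of_dvd hdm),
      ← three_mul_sub_count_eq fun h => by have := h.trans hdm; lia]
    simp [hf_dvd, f]
  calc 3 * ∑ k ∈ antidiagonal m, divisorCharSum χ₃ k.1 * divisorCharSum χ₃ k.2
      = 3 * ∑ t ∈ bilinearReps m, (f (t.1.1 - t.2.1) - f (t.1.1 + t.2.1)) := by
        rw [← sum_bilinearReps_char_mul_char]
        simp only [hχ, f]
        push_cast
        rfl
    _ = ∑ d ∈ m.divisors, ((d : ℤ) - χ₃ d) := by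
        rw [liouville_identity hf, mul_sum]
        exact sum_congr rfl hterm
    _ = ∑ d ∈ m.divisors, (d : ℤ) := by
        rw [sum_sub_distrib, ← divisorCharSum, divisorCharSum_eq_zero_of_mod_three_eq_two hm,
          sub_zero]

theorem three_mul_sum_divisorCharSum_three_mul_add_one (n : ℕ) :
    3 * ∑ k ∈ antidiagonal n,
        divisorCharSum χ₃ (3 * k.1 + 1) * divisorCharSum χ₃ (3 * k.2 + 1)
      = ∑ d ∈ (3 * n + 2).divisors, (d : ℤ) := by
  rw [← three_mul_sum_antidiagonal_divisorCharSum (by lia)]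
  congr 1
  refine sum_of_injOn (fun k => (3 * k.1 + 1, 3 * k.2 + 1)) ?_ ?_ ?_ fun _ _ => rfl
  · rintro ⟨i, j⟩ - ⟨i', j'⟩ - h
    simpa using h
  · rintro ⟨i, j⟩ h
    simp only [mem_coe, HasAntidiagonal.mem_antidiagonal] at h ⊢
    lia
  · rintro ⟨i, j⟩ hij himage
    simp only [HasAntidiagonal.mem_antidiagonal] at hij
    obtain hi | hj : i % 3 = 2 ∨ j % 3 = 2 := by
      by_contra! hmod
      refine himage ⟨(i / 3, j / 3), ?_, ?_⟩
      · simp only [mem_coe, HasAntidiagonal.mem_antidiagonal]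
        lia
      · ext <;> dsimp only <;> lia
    · rw [divisorCharSum_eq_zero_of_mod_three_eq_two hi, zero_mul]
    · rw [divisorCharSum_eq_zero_of_mod_three_eq_two hj, mul_zero]

end CharacterModThree

/-! ### Norms of Eisenstein integers -/

/-- The pairs that parametrise the 3-cores of size `n`. -/
def threeCorePairs (n : ℕ) : Set (ℕ × ℕ) :=
  {v | v.1 ^ 2 + v.2 ^ 2 + v.2 = n + v.1 * v.2}

lemma mem_threeCorePairs {n : ℕ} {v : ℕ × ℕ} :
    v ∈ threeCorePairs n ↔ v.1 ^ 2 + v.2 ^ 2 + v.2 = n + v.1 * v.2 :=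
  Iff.rfl

lemma threeCorePairs_finite (n : ℕ) : (threeCorePairs n).Finite := by
  refine (Set.finite_Iic (n, n)).subset fun v hv => ?_
  rw [mem_threeCorePairs] at hv
  rw [Set.mem_Iic, Prod.le_def]
  constructor <;> rcases le_total v.1 v.2 with h | h <;> nlinarith

open QuadraticAlgebra (norm)

/-- The Eisenstein integers `ℤ[ω]`, with `ω ^ 2 = ω - 1`, so `ω` is a primitive sixth root
of unity. -/
abbrev EisensteinInt : Type := QuadraticAlgebra ℤ (-1) 1

namespace EisensteinInt

lemma norm_eq (z : EisensteinInt) : norm z = z.re ^ 2 + z.re * z.im + z.im ^ 2 := by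
  rw [QuadraticAlgebra.norm_def]
  ring

lemma four_mul_norm_eq (z : EisensteinInt) :
    4 * norm z = (2 * z.re + z.im) ^ 2 + 3 * z.im ^ 2 := by
  rw [norm_eq]
  ring

lemma norm_nonneg (z : EisensteinInt) : 0 ≤ norm z := by
  nlinarith [four_mul_norm_eq z]

lemma norm_eq_zero_iff {z : EisensteinInt} : norm z = 0 ↔ z = 0 := by
  refine ⟨fun h => ?_, fun h => by rw [h, QuadraticAlgebra.norm_zero]⟩
  have h4 := four_mul_norm_eq z
  have him : z.im = 0 := by nlinarith
  rw [norm_eq, him] at h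
  exact QuadraticAlgebra.ext (by simpa using h) him

lemma norm_pos {z : EisensteinInt} (hz : z ≠ 0) : 0 < norm z :=
  (norm_nonneg z).lt_of_ne' (norm_eq_zero_iff.not.2 hz)

lemma isUnit_iff_norm_eq_one {z : EisensteinInt} : IsUnit z ↔ norm z = 1 := by
  rw [QuadraticAlgebra.isUnit_iff_norm_isUnit, Int.isUnit_iff]
  have := norm_nonneg z
  lia

lemma norm_eq_mul_star (z : EisensteinInt) : ((norm z : ℤ) : EisensteinInt) = z * star z :=
  QuadraticAlgebra.algebraMap_norm_eq_mul_star z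

lemma intCast_dvd_iff {n : ℤ} {z : EisensteinInt} :
    (n : EisensteinInt) ∣ z ↔ n ∣ z.re ∧ n ∣ z.im := by
  constructor
  · rintro ⟨w, rfl⟩
    simp
  · rintro ⟨⟨x, hx⟩, y, hy⟩
    exact ⟨⟨x, y⟩, by ext <;> simp [hx, hy]⟩

lemma norm_dvd_norm {z w : EisensteinInt} (h : z ∣ w) : norm z ∣ norm w :=
  map_dvd QuadraticAlgebra.norm h

instance : IsDomain EisensteinInt :=
  have : NoZeroDivisors EisensteinInt :=
    ⟨fun {z w} h => by
      simpa only [map_mul, mul_eq_zero, norm_eq_zero_iff] using norm_eq_zero_iff.2 h⟩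
  NoZeroDivisors.to_isDomain _

-- The coordinates of the quotient are those of `z / w`, rounded to the nearest integer.
lemma exists_norm_sub_mul_lt (z : EisensteinInt) {w : EisensteinInt} (hw : w ≠ 0) :
    ∃ q, norm (z - w * q) < norm w := by
  have hn := norm_pos hw
  set n := norm w with hn_def
  have hround (x : ℤ) : ∃ q, |2 * (x - n * q)| ≤ n := by
    refine ⟨(2 * x + n) / (2 * n), ?_⟩
    have := Int.emod_add_mul_ediv (2 * x + n) (2 * n)
    have := Int.emod_nonneg (2 * x + n) (by positivity : 2 * n ≠ 0)
    have := Int.emod_lt_of_pos (2 * x + n) (by positivity : 0 < 2 * n)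
    rw [abs_le]
    constructor <;> linarith
  obtain ⟨q₁, h₁⟩ := hround (star w * z).re
  obtain ⟨q₂, h₂⟩ := hround (star w * z).im
  set r₁ := (star w * z).re - n * q₁
  set r₂ := (star w * z).im - n * q₂
  refine ⟨⟨q₁, q₂⟩, ?_⟩
  have hr : star w * (z - w * ⟨q₁, q₂⟩) = ⟨r₁, r₂⟩ := by
    rw [mul_sub, ← mul_assoc, mul_comm (star w) w, ← norm_eq_mul_star]
    ext <;> simp [r₁, r₂, n]
  have hnorm : n * norm (z - w * ⟨q₁, q₂⟩) = r₁ ^ 2 + r₁ * r₂ + r₂ ^ 2 := by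
    rw [hn_def, ← QuadraticAlgebra.norm_star w, ← map_mul, hr, norm_eq]
  rw [abs_le] at h₁ h₂
  nlinarith

open scoped Classical in
noncomputable instance : EuclideanDomain EisensteinInt where
  quotient z w := if hw : w = 0 then 0 else (exists_norm_sub_mul_lt z hw).choose
  quotient_zero z := dif_pos rfl
  remainder z w := z - w * if hw : w = 0 then 0 else (exists_norm_sub_mul_lt z hw).choose
  quotient_mul_add_remainder_eq z w := add_sub_cancel _ _
  r z w := (norm z).toNat < (norm w).toNat
  r_wellFounded := (measure fun z : EisensteinInt => (norm z).toNat).wf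
  remainder_lt z w hw := by
    rw [dif_neg hw]
    exact (Int.toNat_lt_toNat (norm_pos hw)).2 (exists_norm_sub_mul_lt z hw).choose_spec
  mul_left_not_lt z w hw := by
    rw [not_lt, map_mul]
    exact Int.toNat_le_toNat (le_mul_of_one_le_right (norm_nonneg z) (norm_pos hw))

lemma prime_of_norm_eq_prime {z : EisensteinInt} {p : ℕ} (hp : p.Prime) (hz : norm z = p) :
    Prime z := by
  refine Irreducible.prime ⟨fun hu => ?_, fun v w hvw => ?_⟩
  · rw [isUnit_iff_norm_eq_one, hz] at hu
    exact hp.ne_one (by exact_mod_cast hu)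
  · have hirr := (Nat.prime_iff_prime_int.1 hp).irreducible
    rw [← hz, hvw, map_mul] at hirr
    simp only [QuadraticAlgebra.isUnit_iff_norm_isUnit]
    exact hirr.isUnit_or_isUnit rfl

lemma exists_norm_eq_of_not_prime {p : ℕ} (hp : p.Prime) (hnot : ¬Prime (p : EisensteinInt)) :
    ∃ π : EisensteinInt, norm π = p := by
  have hnorm : norm (p : EisensteinInt) = (p ^ 2 : ℕ) := by simp
  have hunit : ¬IsUnit (p : EisensteinInt) := by
    rw [isUnit_iff_norm_eq_one, hnorm]
    exact_mod_cast (Nat.one_lt_pow two_ne_zero hp.one_lt).ne'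
  rw [← irreducible_iff_prime, irreducible_iff, not_and] at hnot
  push Not at hnot
  obtain ⟨a, b, hab, ha, hb⟩ := hnot hunit
  rw [isUnit_iff_norm_eq_one] at ha hb
  obtain ⟨m, hm⟩ := Int.eq_ofNat_of_zero_le (norm_nonneg a)
  obtain ⟨n, hn⟩ := Int.eq_ofNat_of_zero_le (norm_nonneg b)
  rw [hab, map_mul, hm, hn] at hnorm
  have hmn : m * n = p ^ 2 := by exact_mod_cast hnorm
  have hm_ne : m ≠ 1 := fun h => ha (by rw [hm, h, Nat.cast_one])
  have hn_ne : n ≠ 1 := fun h => hb (by rw [hn, h, Nat.cast_one])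
  exact ⟨a, by rw [hm, ((Nat.Prime.mul_eq_prime_sq_iff hp hm_ne hn_ne).1 hmn).1]⟩

lemma exists_dvd_sq_add_self_add_one {p : ℕ} (hp : p.Prime) (hp3 : p % 3 = 1) :
    ∃ t : ℤ, (p : ℤ) ∣ t ^ 2 + t + 1 := by
  have := Fact.mk hp
  obtain ⟨u, hu⟩ := exists_prime_orderOf_dvd_card (G := (ZMod p)ˣ) 3
    (by rw [ZMod.card_units]; lia)
  have hprim : IsPrimitiveRoot (u : ZMod p) 3 :=
    IsPrimitiveRoot.coe_units_iff.2 (hu ▸ IsPrimitiveRoot.orderOf u)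
  have hroot : (u : ZMod p) ^ 2 + u + 1 = 0 := by
    simpa [Polynomial.cyclotomic_three] using hprim.isRoot_cyclotomic three_pos
  obtain ⟨t, ht⟩ := ZMod.intCast_surjective (u : ZMod p)
  refine ⟨t, (ZMod.intCast_zmod_eq_zero_iff_dvd _ p).1 ?_⟩
  push_cast
  rw [ht, hroot]

lemma exists_norm_eq_of_mod_three_eq_one {p : ℕ} (hp : p.Prime) (hp3 : p % 3 = 1) :
    ∃ π : EisensteinInt, norm π = p := by
  obtain ⟨t, ht⟩ := exists_dvd_sq_add_self_add_one hp hp3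
  refine exists_norm_eq_of_not_prime hp fun hprime => ?_
  have hdvd : (p : EisensteinInt) ∣ ⟨t, 1⟩ * star ⟨t, 1⟩ := by
    rw [← norm_eq_mul_star, ← Int.cast_natCast]
    exact Int.cast_dvd_cast _ _ (by simpa [norm_eq] using ht)
  have him (z : EisensteinInt) (hz : IsUnit z.im) : ¬(p : EisensteinInt) ∣ z := fun h => by
    rw [← Int.cast_natCast, intCast_dvd_iff] at h
    exact (Nat.prime_iff_prime_int.1 hp).not_isUnit (isUnit_of_dvd_unit h.2 hz)
  exact (hprime.dvd_or_dvd hdvd).elim (him _ (by simp)) (him _ (by simp))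

lemma norm_eq_sq_sub_add (z : EisensteinInt) :
    norm z = (z.re - z.im) ^ 2 + 3 * (z.re * z.im) := by
  rw [norm_eq]
  ring

lemma norm_emod_three_ne_two (z : EisensteinInt) : norm z % 3 ≠ 2 := by
  intro h
  have hsq := norm_eq_sq_sub_add z
  have : (z.re - z.im) ^ 2 % 3 ≠ 2 := by
    rw [sq, Int.mul_emod]
    obtain h | h | h : (z.re - z.im) % 3 = 0 ∨ (z.re - z.im) % 3 = 1 ∨ (z.re - z.im) % 3 = 2 := by
      lia
    all_goals simp [h]
  lia

lemma natCast_prime_of_mod_three_eq_two {p : ℕ} (hp : p.Prime) (hp3 : p % 3 = 2) :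
    Prime (p : EisensteinInt) := by
  by_contra hnot
  obtain ⟨π, hπ⟩ := exists_norm_eq_of_not_prime hp hnot
  exact norm_emod_three_ne_two π (by lia)

lemma star_dvd_star_iff {z w : EisensteinInt} : star z ∣ star w ↔ z ∣ w :=
  map_dvd_iff (starRingAut (R := EisensteinInt))

-- If `π ∣ star π` then `π` divides `π - star π`, whose norm is `3 * π.im ^ 2`.
lemma not_dvd_star_of_norm_eq_prime {π : EisensteinInt} {p : ℕ} (hp : p.Prime) (hp3 : p ≠ 3)
    (hπ : norm π = p) : ¬π ∣ star π := by
  intro hdvd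
  have hpZ := Nat.prime_iff_prime_int.1 hp
  have hnorm : norm (π - star π) = 3 * π.im ^ 2 := by
    simp only [norm_eq, QuadraticAlgebra.re_sub, QuadraticAlgebra.im_sub,
      QuadraticAlgebra.re_star, QuadraticAlgebra.im_star]
    ring
  have him : (p : ℤ) ∣ π.im := by
    have h := norm_dvd_norm (dvd_sub dvd_rfl hdvd)
    rw [hπ, hnorm] at h
    refine hpZ.dvd_of_dvd_pow ((hpZ.dvd_or_dvd h).resolve_left fun h3 => hp3 ?_)
    exact (Nat.prime_dvd_prime_iff_eq hp Nat.prime_three).1 (by exact_mod_cast h3)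
  have hre : (p : ℤ) ∣ π.re := by
    have h : π.re ^ 2 = p - π.im * (π.re + π.im) := by
      rw [← hπ, norm_eq]
      ring
    exact hpZ.dvd_of_dvd_pow (h ▸ dvd_sub dvd_rfl (him.mul_right _))
  have hsq : (p : ℤ) ^ 2 ∣ (p : ℤ) ^ 1 := by
    simpa [hπ] using norm_dvd_norm (intCast_dvd_iff.2 ⟨hre, him⟩)
  exact absurd ((pow_dvd_pow_iff hpZ.ne_zero hpZ.not_isUnit).1 hsq) (by norm_num)

/-- The Eisenstein integers of norm `k`. -/
def normFiber (k : ℕ) : Set EisensteinInt :=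
  {z | norm z = k}

lemma mem_normFiber {k : ℕ} {z : EisensteinInt} : z ∈ normFiber k ↔ norm z = k :=
  Iff.rfl

lemma normFiber_finite (k : ℕ) : (normFiber k).Finite := by
  have hbox : (Set.Icc (-(2 * k) : ℤ) (2 * k) ×ˢ Set.Icc (-(2 * k) : ℤ) (2 * k)).Finite :=
    (Set.finite_Icc _ _).prod (Set.finite_Icc _ _)
  refine Set.Finite.subset (hbox.preimage (f := fun z : EisensteinInt => (z.re, z.im)) ?_) ?_
  · rintro ⟨x, y⟩ - ⟨x', y'⟩ - h
    simpa using h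
  · intro z (hz : norm z = k)
    rw [norm_eq] at hz
    have hre : z.re ^ 2 ≤ 2 * k := by nlinarith [sq_nonneg (z.re + z.im)]
    have him : z.im ^ 2 ≤ 2 * k := by nlinarith [sq_nonneg (z.re + z.im)]
    have hIcc (x : ℤ) (hx : x ^ 2 ≤ 2 * k) : x ∈ Set.Icc (-(2 * k) : ℤ) (2 * k) :=
      ⟨neg_le.1 ((Int.le_self_sq (-x)).trans ((neg_sq x).trans_le hx)),
        (Int.le_self_sq x).trans hx⟩
    exact ⟨hIcc _ hre, hIcc _ him⟩

variable {p : ℕ}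

lemma ncard_image_mul_left {α : EisensteinInt} (hα : α ≠ 0) (s : Set EisensteinInt) :
    ((α * ·) '' s).ncard = s.ncard :=
  Set.ncard_image_of_injective s (mul_right_injective₀ hα)

lemma image_mul_left_normFiber {α : EisensteinInt} {n : ℕ} (hn : n ≠ 0) (hα : norm α = n) (k : ℕ) :
    (α * ·) '' normFiber k = {z ∈ normFiber (n * k) | α ∣ z} := by
  have hmem (w : EisensteinInt) : α * w ∈ normFiber (n * k) ↔ w ∈ normFiber k := by
    simp [normFiber, hα, hn]
  ext z
  constructor
  · rintro ⟨w, hw, rfl⟩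
    exact ⟨(hmem w).2 hw, dvd_mul_right _ _⟩
  · rintro ⟨hz, w, rfl⟩
    exact ⟨w, (hmem w).1 hz, rfl⟩

lemma image_star_mul_normFiber {π : EisensteinInt} (hp : p.Prime) (hp3 : p ≠ 3) (hπ : norm π = p)
    (k : ℕ) :
    (star π * ·) '' {w ∈ normFiber k | ¬π ∣ w} = {z ∈ normFiber (p * k) | ¬π ∣ z} := by
  have hprime := prime_of_norm_eq_prime hp hπ
  have hmem := image_mul_left_normFiber hp.ne_zero ((QuadraticAlgebra.norm_star π).trans hπ) k
  ext z
  constructor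
  · rintro ⟨w, ⟨hw, hπw⟩, rfl⟩
    exact ⟨(hmem.subset ⟨w, hw, rfl⟩).1, fun h => (hprime.dvd_or_dvd h).elim
      (not_dvd_star_of_norm_eq_prime hp hp3 hπ) hπw⟩
  · rintro ⟨hz, hπz⟩
    have hdvd : π ∣ z * star z := by
      rw [← norm_eq_mul_star, mem_normFiber.1 hz, Nat.cast_mul, ← hπ, Int.cast_mul,
        norm_eq_mul_star, mul_assoc]
      exact dvd_mul_right _ _
    have hstar : star π ∣ z := by
      rw [← star_dvd_star_iff, star_star]
      exact (hprime.dvd_or_dvd hdvd).resolve_left hπz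
    obtain ⟨w, hw, rfl⟩ := hmem.superset ⟨hz, hstar⟩
    exact ⟨w, ⟨hw, fun h => hπz (h.mul_left _)⟩, rfl⟩

lemma ncard_normFiber_not_dvd {π : EisensteinInt} (hp : p.Prime) (hp3 : p ≠ 3) (hπ : norm π = p)
    (k : ℕ) :
    {z ∈ normFiber (p * k) | ¬π ∣ z}.ncard = {z ∈ normFiber k | ¬π ∣ z}.ncard := by
  rw [← image_star_mul_normFiber hp hp3 hπ,
    ncard_image_mul_left (star_ne_zero.2 (prime_of_norm_eq_prime hp hπ).ne_zero)]

lemma ncard_normFiber_prime_mul {π : EisensteinInt} (hp : p.Prime) (hp3 : p ≠ 3) (hπ : norm π = p)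
    (k : ℕ) :
    (normFiber (p * k)).ncard = (normFiber k).ncard + {z ∈ normFiber k | ¬π ∣ z}.ncard := by
  rw [← ncard_normFiber_not_dvd hp hp3 hπ,
    ← ncard_image_mul_left (prime_of_norm_eq_prime hp hπ).ne_zero (normFiber k),
    image_mul_left_normFiber hp.ne_zero hπ]
  exact (Set.ncard_inter_add_ncard_sdiff_eq_ncard _ {z | π ∣ z} (normFiber_finite _)).symm

lemma natCast_dvd_of_mem_normFiber (hp : p.Prime) (hp3 : p % 3 = 2) {k : ℕ} {z : EisensteinInt}
    (hz : z ∈ normFiber (p * k)) : (p : EisensteinInt) ∣ z := by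
  have hdvd : (p : EisensteinInt) ∣ z * star z := by
    rw [← norm_eq_mul_star, mem_normFiber.1 hz]
    push_cast
    exact dvd_mul_right _ _
  refine ((natCast_prime_of_mod_three_eq_two hp hp3).dvd_or_dvd hdvd).elim id fun h => ?_
  rwa [← star_dvd_star_iff, star_natCast]

lemma ncard_normFiber_sq_mul_of_mod_three_eq_two (hp : p.Prime) (hp3 : p % 3 = 2) (k : ℕ) :
    (normFiber (p * (p * k))).ncard = (normFiber k).ncard := by
  have hnorm : norm (p : EisensteinInt) = (p * p : ℕ) := by simp [sq]
  rw [← ncard_image_mul_left (natCast_prime_of_mod_three_eq_two hp hp3).ne_zero (normFiber k),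
    image_mul_left_normFiber (mul_ne_zero hp.ne_zero hp.ne_zero) hnorm, mul_assoc]
  congr 1
  exact (Set.sep_eq_self_iff_mem_true.2 fun z hz => natCast_dvd_of_mem_normFiber hp hp3 hz).symm

lemma normFiber_eq_empty_of_mod_three_eq_two (hp : p.Prime) (hp3 : p % 3 = 2) {k : ℕ}
    (hk : ¬p ∣ k) : normFiber (p * k) = ∅ := by
  refine Set.eq_empty_of_forall_notMem fun z hz => hk ?_
  have h := norm_dvd_norm (natCast_dvd_of_mem_normFiber hp hp3 hz)
  rw [mem_normFiber.1 hz, QuadraticAlgebra.norm_natCast, sq,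
    Nat.cast_mul] at h
  exact_mod_cast Int.dvd_of_mul_dvd_mul_left (by exact_mod_cast hp.ne_zero) h

lemma ncard_normFiber_prime_mul_of_not_dvd (hp : p.Prime) (hp3 : ¬3 ∣ p) {k : ℕ} (hk : ¬p ∣ k) :
    ((normFiber (p * k)).ncard : ℤ) = (1 + χ₃ p) * (normFiber k).ncard := by
  obtain ⟨hmod, hχ⟩ | ⟨hmod, hχ⟩ := mod_three_and_quadraticChar_eq hp3
  · obtain ⟨π, hπ⟩ := exists_norm_eq_of_mod_three_eq_one hp hmod
    have hsep : {z ∈ normFiber k | ¬π ∣ z} = normFiber k :=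
      Set.sep_eq_self_iff_mem_true.2 fun z (hz : norm z = k) hπz =>
        hk (by exact_mod_cast hπ ▸ hz ▸ norm_dvd_norm hπz)
    rw [hχ, ncard_normFiber_prime_mul hp (by lia) hπ, hsep]
    push_cast
    ring
  · rw [hχ, normFiber_eq_empty_of_mod_three_eq_two hp hmod hk]
    simp

lemma ncard_normFiber_prime_mul_prime_mul (hp : p.Prime) (hp3 : ¬3 ∣ p) (k : ℕ) :
    ((normFiber (p * (p * k))).ncard : ℤ) + χ₃ p * (normFiber k).ncard
      = (1 + χ₃ p) * (normFiber (p * k)).ncard := by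
  obtain ⟨hmod, hχ⟩ | ⟨hmod, hχ⟩ := mod_three_and_quadraticChar_eq hp3
  · obtain ⟨π, hπ⟩ := exists_norm_eq_of_mod_three_eq_one hp hmod
    have hp3' : p ≠ 3 := by lia
    rw [hχ, ncard_normFiber_prime_mul hp hp3' hπ (p * k), ncard_normFiber_not_dvd hp hp3' hπ,
      ncard_normFiber_prime_mul hp hp3' hπ]
    push_cast
    ring
  · rw [hχ, ncard_normFiber_sq_mul_of_mod_three_eq_two hp hmod]
    ring

theorem ncard_normFiber_eq_mul_divisorCharSum {k : ℕ} (hk : ¬3 ∣ k) :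
    ((normFiber k).ncard : ℤ) = (normFiber 1).ncard * divisorCharSum χ₃ k := by
  induction k using Nat.strong_induction_on with
  | _ k ih =>
    obtain rfl | hk1 := eq_or_ne k 1
    · rw [divisorCharSum_one, mul_one]
    obtain ⟨p, hp, m, rfl⟩ := Nat.exists_prime_and_dvd hk1
    rw [Nat.prime_three.dvd_mul, not_or] at hk
    obtain ⟨hp3, hm3⟩ := hk
    have hm0 : m ≠ 0 := by rintro rfl; exact hm3 (dvd_zero 3)
    have ihm := ih m (lt_mul_of_one_lt_left (Nat.pos_of_ne_zero hm0) hp.one_lt) hm3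
    by_cases hpm : p ∣ m
    · obtain ⟨j, rfl⟩ := hpm
      have hj3 : ¬3 ∣ j := fun h => hm3 (h.mul_left p)
      have hj0 : j ≠ 0 := right_ne_zero_of_mul hm0
      have hj_lt : j < p * (p * j) := Nat.lt_of_lt_of_le
        (lt_mul_of_one_lt_left (Nat.pos_of_ne_zero hj0) hp.one_lt) (Nat.le_mul_of_pos_left _ hp.pos)
      linear_combination ncard_normFiber_prime_mul_prime_mul hp hp3 j + (1 + χ₃ p) * ihm
        - χ₃ p * ih j hj_lt hj3
        - (normFiber 1).ncard * divisorCharSum_prime_mul_prime_mul χ₃ hp hj0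
    · rw [ncard_normFiber_prime_mul_of_not_dvd hp hp3 hpm, ihm,
        divisorCharSum_prime_mul_of_not_dvd χ₃ hp hm0 hpm]
      ring

/-- A sector of angle `2π / 3`, intersected with a residue class modulo `√-3`: it contains exactly
one associate of each Eisenstein integer of norm prime to `3`. -/
def primarySector : Set EisensteinInt :=
  {z | (z.re - z.im) % 3 = 1 ∧ 0 < z.re + 2 * z.im ∧ 0 < 2 * z.re + z.im}

lemma mem_normFiber_one_iff {u : EisensteinInt} :
    u ∈ normFiber 1 ↔
      u = ⟨1, 0⟩ ∨ u = ⟨0, 1⟩ ∨ u = ⟨-1, 1⟩ ∨ u = ⟨-1, 0⟩ ∨ u = ⟨0, -1⟩ ∨ u = ⟨1, -1⟩ := by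
  refine ⟨fun h => ?_, ?_⟩
  · obtain ⟨x, y⟩ := u
    have hnorm : x ^ 2 + x * y + y ^ 2 = 1 := by simpa [normFiber, norm_eq] using h
    have hx : -1 ≤ x ∧ x ≤ 1 := ⟨by nlinarith [sq_nonneg (x + 2 * y)], by
      nlinarith [sq_nonneg (x + 2 * y)]⟩
    have hy : -1 ≤ y ∧ y ≤ 1 := ⟨by nlinarith [sq_nonneg (2 * x + y)], by
      nlinarith [sq_nonneg (2 * x + y)]⟩
    obtain ⟨hx₁, hx₂⟩ := hx
    obtain ⟨hy₁, hy₂⟩ := hy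
    interval_cases x <;> interval_cases y <;> simp_all
  · rintro (rfl | rfl | rfl | rfl | rfl | rfl) <;> simp [normFiber, norm_eq]

lemma sub_emod_three_ne_zero_of_mem_normFiber {k : ℕ} (hk : ¬3 ∣ k) {z : EisensteinInt}
    (hz : z ∈ normFiber k) : (z.re - z.im) % 3 ≠ 0 := by
  intro h
  have hdvd : (3 : ℤ) ∣ norm z := by
    rw [norm_eq_sq_sub_add]
    exact dvd_add (dvd_pow (Int.dvd_of_emod_eq_zero h) two_ne_zero) (dvd_mul_right _ _)
  rw [mem_normFiber.1 hz] at hdvd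
  exact hk (by exact_mod_cast hdvd)

lemma exists_unit_mul_mem_primarySector {z : EisensteinInt} (hz : (z.re - z.im) % 3 ≠ 0) :
    ∃ u ∈ normFiber 1, u * z ∈ primarySector := by
  simp only [mem_normFiber_one_iff, or_and_right, exists_or, exists_eq_left, primarySector,
    Set.mem_ofPred_eq, QuadraticAlgebra.re_mul, QuadraticAlgebra.im_mul]
  lia

lemma eq_one_of_mul_mem_primarySector {u z : EisensteinInt} (hu : u ∈ normFiber 1)
    (hz : z ∈ primarySector) (huz : u * z ∈ primarySector) : u = 1 := by
  simp only [primarySector, Set.mem_ofPred_eq, QuadraticAlgebra.re_mul,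
    QuadraticAlgebra.im_mul] at hz huz
  obtain rfl | rfl | rfl | rfl | rfl | rfl := mem_normFiber_one_iff.1 hu
  · rfl
  all_goals
    exfalso
    lia

lemma ncard_normFiber_eq_mul_ncard_primarySector {k : ℕ} (hk : ¬3 ∣ k) :
    (normFiber k).ncard = (normFiber 1).ncard * (normFiber k ∩ primarySector).ncard := by
  have hmem {u z : EisensteinInt} (hu : u ∈ normFiber 1) :
      u * z ∈ normFiber k ↔ z ∈ normFiber k := by
    simp only [mem_normFiber, map_mul, mem_normFiber.1 hu, Nat.cast_one, one_mul]
  have hunit {u : EisensteinInt} (hu : u ∈ normFiber 1) : u * star u = 1 := by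
    rw [← norm_eq_mul_star, mem_normFiber.1 hu, Nat.cast_one, Int.cast_one]
  have hstar {u : EisensteinInt} (hu : u ∈ normFiber 1) : star u ∈ normFiber 1 :=
    (QuadraticAlgebra.norm_star u).trans hu
  rw [← Set.ncard_prod]
  refine (Set.ncard_congr (fun t _ => t.1 * t.2) ?_ ?_ ?_).symm
  · rintro ⟨u, z⟩ ⟨hu, hz, -⟩
    exact (hmem hu).2 hz
  · rintro ⟨u, z⟩ ⟨v, w⟩ ⟨hu, -, hz⟩ ⟨hv, -, hw⟩ (h : u * z = v * w)
    have hzw : star v * u * z = w := by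
      rw [mul_assoc, h, ← mul_assoc, mul_comm (star v), hunit hv, one_mul]
    have huv : star v * u = 1 := by
      refine eq_one_of_mul_mem_primarySector ?_ hz (hzw ▸ hw)
      simp [normFiber, mem_normFiber.1 hu, mem_normFiber.1 hv]
    have : u = v := by
      rw [← one_mul u, ← hunit hv, mul_assoc, huv, mul_one]
    rw [this, ← hzw, huv, one_mul]
  · intro z hz
    obtain ⟨u, hu, huz⟩ := exists_unit_mul_mem_primarySector
      (sub_emod_three_ne_zero_of_mem_normFiber hk hz)
    exact ⟨(star u, u * z), ⟨hstar hu, (hmem hu).2 hz, huz⟩, by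
      rw [← mul_assoc, mul_comm (star u), hunit hu, one_mul]⟩

lemma ncard_normFiber_inter_primarySector (n : ℕ) :
    (normFiber (3 * n + 1) ∩ primarySector).ncard
      = (threeCorePairs n).ncard := by
  refine (Set.ncard_congr (fun v _ => ⟨2 * v.2 + 1 - v.1, 2 * v.1 - v.2⟩) ?_ ?_ ?_).symm
  · rintro ⟨p, q⟩ (h : p ^ 2 + q ^ 2 + q = n + p * q)
    zify at h
    simp only [normFiber, primarySector, Set.mem_inter_iff, Set.mem_ofPred_eq, norm_eq]
    refine ⟨?_, by lia, by lia, by lia⟩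
    push_cast
    linear_combination 3 * h
  · rintro ⟨p, q⟩ ⟨p', q'⟩ - - h
    simp only [QuadraticAlgebra.mk.injEq] at h
    ext <;> dsimp only <;> lia
  · rintro ⟨x, y⟩ ⟨hnorm, hmod, hp, hq⟩
    simp only at hmod hp hq
    obtain ⟨p, hp⟩ : ∃ p : ℕ, x + 2 * y = 3 * p + 1 := ⟨((x + 2 * y) / 3).toNat, by lia⟩
    obtain ⟨q, hq⟩ : ∃ q : ℕ, 2 * x + y = 3 * q + 2 := ⟨((2 * x + y) / 3).toNat, by lia⟩
    obtain rfl : x = 2 * q + 1 - p := by lia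
    obtain rfl : y = 2 * p - q := by lia
    refine ⟨(p, q), ?_, rfl⟩
    simp only [mem_normFiber, threeCorePairs, Set.mem_ofPred_eq, norm_eq] at hnorm ⊢
    zify
    push_cast at hnorm
    linarith

theorem ncard_threeCorePairs_eq_divisorCharSum (n : ℕ) :
    ((threeCorePairs n).ncard : ℤ) = divisorCharSum χ₃ (3 * n + 1) := by
  have h3 : ¬3 ∣ 3 * n + 1 := by lia
  have hone : (normFiber 1).ncard ≠ 0 :=
    Set.ncard_ne_zero_of_mem (mem_normFiber_one_iff.2 (.inl rfl)) (normFiber_finite 1)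
  have h := ncard_normFiber_eq_mul_divisorCharSum h3
  rw [ncard_normFiber_eq_mul_ncard_primarySector h3, Nat.cast_mul,
    ncard_normFiber_inter_primarySector] at h
  exact mul_left_cancel₀ (by exact_mod_cast hone) h

end EisensteinInt

/-! ### Beta-sets of Young diagrams -/

section BetaSet

open YoungDiagram

lemma hookLength_add_of_mem {μ : YoungDiagram} {i j : ℕ} (h : (i, j) ∈ μ) :
    μ.hookLength i j + i + j + 1 = μ.rowLen i + μ.colLen j := by
  have hj := mem_iff_lt_rowLen.1 h
  have hi := mem_iff_lt_colLen.1 h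
  rw [hookLength]
  lia

lemma hookLength_pos_of_mem {μ : YoungDiagram} {i j : ℕ} (h : (i, j) ∈ μ) :
    0 < μ.hookLength i j := by
  have := hookLength_add_of_mem h
  have hj := mem_iff_lt_rowLen.1 h
  have hi := mem_iff_lt_colLen.1 h
  lia

/-- The beta-set of a Young diagram: the set of hook lengths of its first column. It determines
the diagram, and every finite set of positive integers arises in this way. -/
def betaSet (μ : YoungDiagram) : Finset ℕ :=
  (range (μ.colLen 0)).image (μ.hookLength · 0)

lemma mem_betaSet {μ : YoungDiagram} {x : ℕ} :
    x ∈ betaSet μ ↔ ∃ i, (i, 0) ∈ μ ∧ μ.hookLength i 0 = x := by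
  simp [betaSet, mem_iff_lt_colLen]

lemma zero_notMem_betaSet (μ : YoungDiagram) : 0 ∉ betaSet μ := fun h =>
  let ⟨_, hi, hzero⟩ := mem_betaSet.1 h
  (hookLength_pos_of_mem hi).ne' hzero

lemma hookLength_zero_strictAntiOn (μ : YoungDiagram) :
    StrictAntiOn (μ.hookLength · 0) (range (μ.colLen 0)) := by
  intro i hi k hk hik
  rw [mem_coe, mem_range, ← mem_iff_lt_colLen] at hi hk
  have := hookLength_add_of_mem hi
  have := hookLength_add_of_mem hk
  have := μ.rowLen_anti i k hik.le
  lia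

lemma card_betaSet (μ : YoungDiagram) : #(betaSet μ) = μ.colLen 0 := by
  rw [betaSet, card_image_of_injOn (hookLength_zero_strictAntiOn μ).injOn, card_range]

lemma card_eq_sum_rowLen (μ : YoungDiagram) :
    μ.card = ∑ i ∈ range (μ.colLen 0), μ.rowLen i := by
  simp only [rowLen_eq_card]
  refine card_eq_sum_card_fiberwise fun ⟨i, j⟩ h => ?_
  rw [mem_coe, mem_range, ← mem_iff_lt_colLen]
  exact μ.up_left_mem le_rfl j.zero_le (mem_cells _ |>.1 h)

lemma sum_betaSet (μ : YoungDiagram) :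
    ∑ x ∈ betaSet μ, x = μ.card + ∑ i ∈ range (μ.colLen 0), i := by
  rw [betaSet, sum_image (hookLength_zero_strictAntiOn μ).injOn, card_eq_sum_rowLen,
    ← sum_range_reflect (fun i => i), ← sum_add_distrib]
  refine sum_congr rfl fun i hi => ?_
  rw [mem_range] at hi
  have := hookLength_add_of_mem (mem_iff_lt_colLen.2 hi)
  lia

lemma betaSet_injective : Function.Injective betaSet := by
  intro μ ν h
  have hcol : μ.colLen 0 = ν.colLen 0 := by rw [← card_betaSet, h, card_betaSet]
  have hhook (i : ℕ) (hi : i < μ.colLen 0) : μ.hookLength i 0 = ν.hookLength i 0 := by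
    have hrange : Set.range (fun i : Fin (μ.colLen 0) => μ.hookLength i 0)
        = Set.range (fun i : Fin (μ.colLen 0) => ν.hookLength i 0) := by
      ext x
      simpa [betaSet, hcol, Fin.exists_iff] using Finset.ext_iff.1 h x
    refine congrFun ((StrictAnti.range_inj ?_ ?_).1 hrange) ⟨i, hi⟩
    · exact fun i k hik => hookLength_zero_strictAntiOn μ (by simp) (by simp) hik
    · exact fun i k hik => hookLength_zero_strictAntiOn ν (by simp [← hcol]) (by simp [← hcol]) hik
  have hmem (i : ℕ) : (i, 0) ∈ μ ↔ (i, 0) ∈ ν := by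
    rw [mem_iff_lt_colLen, hcol, mem_iff_lt_colLen]
  ext ⟨i, j⟩
  rw [mem_cells, mem_cells]
  by_cases hi : (i, 0) ∈ μ
  · have := hhook i (mem_iff_lt_colLen.1 hi)
    have := hookLength_add_of_mem hi
    have := hookLength_add_of_mem ((hmem i).1 hi)
    rw [mem_iff_lt_rowLen, mem_iff_lt_rowLen]
    lia
  · exact iff_of_false (fun h => hi (μ.up_left_mem le_rfl j.zero_le h))
      (fun h => hi ((hmem i).2 (ν.up_left_mem le_rfl j.zero_le h)))

lemma exists_rowLen_cons (μ : YoungDiagram) {r : ℕ} (hpos : 0 < r) (hr : μ.rowLen 0 ≤ r) :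
    ∃ ν : YoungDiagram, ν.colLen 0 = μ.colLen 0 + 1 ∧ ν.rowLen 0 = r ∧
      ∀ i < μ.colLen 0, ν.rowLen (i + 1) = μ.rowLen i := by
  have hsorted : (r :: μ.rowLens).SortedGE := by
    refine (List.pairwise_cons.2 ⟨?_, μ.rowLens_sorted.pairwise⟩).sortedGE
    simpa [rowLens] using fun i _ => (μ.rowLen_anti 0 i i.zero_le).trans hr
  have hrowLens_pos : ∀ x ∈ r :: μ.rowLens, 0 < x :=
    List.forall_mem_cons.2 ⟨hpos, μ.pos_of_mem_rowLens⟩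
  refine ⟨ofRowLens _ hsorted, ?_, rowLen_ofRowLens ⟨0, by simp⟩, fun i hi => ?_⟩
  · rw [← length_rowLens, rowLens_length_ofRowLens hrowLens_pos, List.length_cons, length_rowLens]
  · rw [rowLen_ofRowLens ⟨i + 1, by simpa [length_rowLens] using hi⟩]
    simp [get_rowLens]

lemma exists_betaSet_eq_insert (μ : YoungDiagram) {a : ℕ} (ha : 0 < a)
    (hlt : ∀ x ∈ betaSet μ, x < a) : ∃ ν, betaSet ν = insert a (betaSet μ) := by
  have hcol : μ.colLen 0 < a := by
    have hsub : betaSet μ ⊆ Ioo 0 a := fun x hx => mem_Ioo.2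
      ⟨Nat.pos_of_ne_zero fun h => zero_notMem_betaSet μ (h ▸ hx), hlt x hx⟩
    have := card_le_card hsub
    rw [card_betaSet, Nat.card_Ioo] at this
    lia
  have hrow : μ.rowLen 0 ≤ a - μ.colLen 0 := by
    by_cases hmem : (0, 0) ∈ μ
    · have := hlt _ (mem_betaSet.2 ⟨0, hmem, rfl⟩)
      have := hookLength_add_of_mem hmem
      lia
    · rw [mem_iff_lt_rowLen] at hmem
      lia
  obtain ⟨ν, hcolν, hzero, hsucc⟩ := exists_rowLen_cons μ (by lia) hrow
  have hhook_zero : ν.hookLength 0 0 = a := by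
    rw [hookLength]
    lia
  have hhook_succ : ∀ i < μ.colLen 0, ν.hookLength (i + 1) 0 = μ.hookLength i 0 := by
    intro i hi
    rw [hookLength, hookLength, hsucc i hi]
    lia
  refine ⟨ν, ?_⟩
  ext x
  simp only [betaSet, hcolν, mem_insert, mem_image, mem_range, Nat.exists_lt_succ_left, hhook_zero]
  exact or_congr eq_comm (exists_congr fun i => and_congr_right fun hi => by rw [hhook_succ i hi])

theorem exists_betaSet_eq {X : Finset ℕ} (hX : 0 ∉ X) : ∃ μ, betaSet μ = X := by
  induction X using Finset.induction_on_max with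
  | empty => exact ⟨⊥, card_eq_zero.1 (by rw [card_betaSet]; simp [colLen])⟩
  | insert a X hlt ih =>
    rw [mem_insert, not_or] at hX
    obtain ⟨μ, rfl⟩ := ih hX.2
    exact exists_betaSet_eq_insert μ (by lia) hlt

/-! ### Hook lengths as differences of beads and gaps -/

/-- The `j`-th natural number missing from the beta-set of `μ`, read off the `j`-th column:
`colLen 0 - colLen j` elements of the beta-set lie below it. -/
def columnGap (μ : YoungDiagram) (j : ℕ) : ℕ :=
  j + (μ.colLen 0 - μ.colLen j)

lemma hookLength_add_columnGap {μ : YoungDiagram} {i j : ℕ} (h : (i, j) ∈ μ) :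
    μ.hookLength i j + columnGap μ j = μ.hookLength i 0 := by
  have := hookLength_add_of_mem h
  have := hookLength_add_of_mem (μ.up_left_mem le_rfl j.zero_le h)
  have := μ.colLen_anti 0 j j.zero_le
  rw [columnGap]
  lia

lemma hookLength_zero_lt_columnGap {μ : YoungDiagram} {i j : ℕ} (hi : (i, 0) ∈ μ)
    (h : (i, j) ∉ μ) : μ.hookLength i 0 < columnGap μ j := by
  have := hookLength_add_of_mem hi
  have hrow := mem_iff_lt_rowLen.not.1 h
  have hcol := mem_iff_lt_colLen.not.1 h
  have := mem_iff_lt_colLen.1 hi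
  rw [columnGap]
  lia

lemma columnGap_notMem_betaSet (μ : YoungDiagram) (j : ℕ) : columnGap μ j ∉ betaSet μ := by
  intro hmem
  obtain ⟨i, hi, heq⟩ := mem_betaSet.1 hmem
  by_cases h : (i, j) ∈ μ
  · have := hookLength_add_columnGap h
    have := hookLength_pos_of_mem h
    lia
  · exact (hookLength_zero_lt_columnGap hi h).ne heq

lemma exists_columnGap_eq {μ : YoungDiagram} {x : ℕ} (hx : x ∉ betaSet μ) :
    ∃ j, columnGap μ j = x := by
  have hexists : ∃ j, x < columnGap μ (j + 1) := ⟨x, by rw [columnGap]; lia⟩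
  set j := Nat.find hexists
  have hlt : x < columnGap μ (j + 1) := Nat.find_spec hexists
  have hle : columnGap μ j ≤ x := by
    rcases hj : j with - | k
    · simp [columnGap]
    · exact not_lt.1 (Nat.find_min hexists (by lia : k < j))
  refine ⟨j, hle.antisymm (not_lt.1 fun hgap => hx ?_)⟩
  -- Strictly between the gaps of columns `j` and `j + 1` lie the rows of length `j + 1`.
  rw [columnGap] at hlt hgap
  have := μ.colLen_anti 0 j j.zero_le
  obtain ⟨i, hi⟩ : ∃ i, i + x = j + μ.colLen 0 := ⟨j + μ.colLen 0 - x, by lia⟩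
  have hmem : (i, j) ∈ μ := mem_iff_lt_colLen.2 (by lia)
  have hnotMem : (i, j + 1) ∉ μ := mem_iff_lt_colLen.not.2 (by lia)
  have hmem_zero := μ.up_left_mem le_rfl j.zero_le hmem
  refine mem_betaSet.2 ⟨i, hmem_zero, ?_⟩
  have := hookLength_add_of_mem hmem_zero
  rw [mem_iff_lt_rowLen] at hmem hnotMem
  lia

theorem forall_not_dvd_hookLength_iff {μ : YoungDiagram} {t : ℕ} :
    (∀ c ∈ μ.cells, ¬t ∣ μ.hookLength c.1 c.2) ↔ ∀ x, x + t ∈ betaSet μ → x ∈ betaSet μ := by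
  constructor
  · intro hcore x hx
    by_contra hgap
    obtain ⟨j, rfl⟩ := exists_columnGap_eq hgap
    obtain ⟨i, hi, hhook⟩ := mem_betaSet.1 hx
    have hmem : (i, j) ∈ μ := by
      by_contra h
      have := hookLength_zero_lt_columnGap hi h
      lia
    have := hookLength_add_columnGap hmem
    exact hcore (i, j) (mem_cells _ |>.2 hmem) (dvd_of_eq (by lia))
  · rintro hclosed ⟨i, j⟩ hmem ⟨k, hk⟩
    rw [mem_cells] at hmem
    have hdescend (k : ℕ) : ∀ x, x + t * k ∈ betaSet μ → x ∈ betaSet μ := by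
      induction k with
      | zero => simp
      | succ k ih => exact fun x hx => hclosed x (ih _ (by rwa [add_assoc, add_comm t]))
    refine columnGap_notMem_betaSet μ j (hdescend k _ (mem_betaSet.2 ⟨i, ?_, ?_⟩))
    · exact μ.up_left_mem le_rfl j.zero_le hmem
    · rw [← hk, add_comm, hookLength_add_columnGap hmem]

end BetaSet

/-! ### Three-cores -/

/-- The beta-sets of 3-cores, that is, the finite sets of positive integers closed under subtraction
of `3`: for `v = (p, q)`, the first `p` numbers congruent to `1` modulo `3` and the first `q`
numbers congruent to `2`. -/
def threeCoreBeads (v : ℕ × ℕ) : Finset ℕ :=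
  ((range v.1).image (3 * · + 1)).disjUnion ((range v.2).image (3 * · + 2)) <| by
    simp only [disjoint_left, mem_image]
    lia

lemma mem_threeCoreBeads {v : ℕ × ℕ} {x : ℕ} :
    x ∈ threeCoreBeads v ↔ x % 3 = 1 ∧ x / 3 < v.1 ∨ x % 3 = 2 ∧ x / 3 < v.2 := by
  simp only [threeCoreBeads, mem_disjUnion, mem_image, mem_range]
  refine or_congr ⟨?_, fun h => ⟨x / 3, by lia⟩⟩ ⟨?_, fun h => ⟨x / 3, by lia⟩⟩ <;> lia

lemma threeCoreBeads_injective : Function.Injective threeCoreBeads := by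
  rintro ⟨p, q⟩ ⟨p', q'⟩ h
  have hmem := Finset.ext_iff.1 h
  simp only [mem_threeCoreBeads] at hmem
  have hp : p = p' := eq_of_forall_lt_iff fun i => by have := hmem (3 * i + 1); lia
  have hq : q = q' := eq_of_forall_lt_iff fun i => by have := hmem (3 * i + 2); lia
  rw [hp, hq]

lemma exists_forall_mul_add_mem_iff_lt {X : Finset ℕ} {t : ℕ} (ht : 0 < t)
    (hX : ∀ x, x + t ∈ X → x ∈ X) (r : ℕ) : ∃ p, ∀ i, t * i + r ∈ X ↔ i < p := by
  have hlower : IsLowerSet {i | t * i + r ∈ X} := by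
    refine fun k i hik => Nat.le_induction id (fun m _ ih h => ih (hX _ ?_)) k hik
    convert (show t * (m + 1) + r ∈ X from h) using 1
    ring
  rcases hlower.eq_univ_or_Iio with huniv | ⟨p, hp⟩
  · refine absurd (Set.infinite_univ (α := ℕ)) (Set.not_infinite.2 (huniv ▸ ?_))
    exact X.finite_toSet.preimage fun i _ k _ h => by simpa [ht.ne'] using h
  · exact ⟨p, fun i => Set.ext_iff.1 hp i⟩

lemma exists_threeCoreBeads_eq {X : Finset ℕ} (hzero : 0 ∉ X) (hX : ∀ x, x + 3 ∈ X → x ∈ X) :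
    ∃ v, threeCoreBeads v = X := by
  have hrun := exists_forall_mul_add_mem_iff_lt three_pos hX
  obtain ⟨o, ho⟩ := hrun 0
  obtain ⟨p, hp⟩ := hrun 1
  obtain ⟨q, hq⟩ := hrun 2
  obtain rfl : o = 0 := by simpa [hzero] using ho 0
  refine ⟨(p, q), ?_⟩
  ext x
  have hdiv := Nat.div_add_mod x 3
  rw [mem_threeCoreBeads]
  obtain h | h | h : x % 3 = 0 ∨ x % 3 = 1 ∨ x % 3 = 2 := by lia
  · have := ho (x / 3)
    grind
  · have := hp (x / 3)
    grind
  · have := hq (x / 3)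
    grind

lemma isThreeCore_iff_exists_threeCoreBeads_eq {μ : YoungDiagram} :
    μ.IsThreeCore ↔ ∃ v, threeCoreBeads v = betaSet μ := by
  rw [YoungDiagram.IsThreeCore, forall_not_dvd_hookLength_iff]
  refine ⟨exists_threeCoreBeads_eq (zero_notMem_betaSet μ), ?_⟩
  rintro ⟨v, hv⟩ x
  rw [← hv, mem_threeCoreBeads, mem_threeCoreBeads]
  lia

lemma card_threeCoreBeads (v : ℕ × ℕ) : #(threeCoreBeads v) = v.1 + v.2 := by
  rw [threeCoreBeads, card_disjUnion, card_image_of_injective, card_image_of_injective,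
    card_range, card_range] <;> exact fun i k h => by lia

lemma two_mul_sum_threeCoreBeads (v : ℕ × ℕ) :
    2 * ∑ x ∈ threeCoreBeads v, x + v.1 = 3 * v.1 ^ 2 + 3 * v.2 ^ 2 + v.2 := by
  have hone (p : ℕ) : 2 * ∑ i ∈ range p, (3 * i + 1) + p = 3 * p ^ 2 := by
    induction p with
    | zero => rfl
    | succ p ih => rw [sum_range_succ]; linarith
  have htwo (q : ℕ) : 2 * ∑ i ∈ range q, (3 * i + 2) = 3 * q ^ 2 + q := by
    induction q with
    | zero => rfl
    | succ q ih => rw [sum_range_succ]; linarith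
  rw [threeCoreBeads, sum_disjUnion, sum_image (by simp), sum_image (by simp)]
  linarith [hone v.1, htwo v.2]

lemma sq_add_sq_add_eq_card_add_mul {μ : YoungDiagram} {v : ℕ × ℕ}
    (h : threeCoreBeads v = betaSet μ) :
    v.1 ^ 2 + v.2 ^ 2 + v.2 = μ.card + v.1 * v.2 := by
  have hcol : v.1 + v.2 = μ.colLen 0 := by rw [← card_threeCoreBeads, h, card_betaSet]
  have hsum := sum_betaSet μ
  have htwo := two_mul_sum_threeCoreBeads v
  have htriangle : 2 * ∑ i ∈ range (v.1 + v.2), i + (v.1 + v.2) = (v.1 + v.2) ^ 2 := by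
    rw [mul_comm, sum_range_id_mul_two, Nat.mul_sub_one, sq,
      Nat.sub_add_cancel (Nat.le_mul_self _)]
  rw [← h, ← hcol] at hsum
  nlinarith

lemma image_betaSet_isThreeCore (n : ℕ) :
    betaSet '' {μ | μ.card = n ∧ μ.IsThreeCore} = threeCoreBeads '' threeCorePairs n := by
  ext X
  constructor
  · rintro ⟨μ, ⟨rfl, hcore⟩, rfl⟩
    obtain ⟨v, hv⟩ := isThreeCore_iff_exists_threeCoreBeads_eq.1 hcore
    exact ⟨v, sq_add_sq_add_eq_card_add_mul hv, hv⟩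
  · rintro ⟨v, hv, rfl⟩
    obtain ⟨μ, hμ⟩ := exists_betaSet_eq (X := threeCoreBeads v) (by simp [mem_threeCoreBeads])
    have := sq_add_sq_add_eq_card_add_mul hμ.symm
    rw [mem_threeCorePairs] at hv
    exact ⟨μ, ⟨by lia, isThreeCore_iff_exists_threeCoreBeads_eq.2 ⟨v, hμ.symm⟩⟩, hμ⟩

lemma a3_eq_ncard_threeCorePairs (n : ℕ) : a3 n = (threeCorePairs n).ncard := by
  rw [← Set.ncard_image_of_injective _ threeCoreBeads_injective, ← image_betaSet_isThreeCore,
    Set.ncard_image_of_injective _ betaSet_injective]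
  rfl

lemma finite_isThreeCore (n : ℕ) : {μ : YoungDiagram | μ.card = n ∧ μ.IsThreeCore}.Finite := by
  refine .of_finite_image ?_ betaSet_injective.injOn
  rw [image_betaSet_isThreeCore]
  exact (threeCorePairs_finite n).image _

open scoped Classical in
theorem A3_eq_sum_antidiagonal (n : ℕ) : A3 n = ∑ k ∈ antidiagonal n, a3 k.1 * a3 k.2 := by
  let cores (k : ℕ) : Finset YoungDiagram := (finite_isThreeCore k).toFinset
  have hmem {k : ℕ} {μ : YoungDiagram} : μ ∈ cores k ↔ μ.card = k ∧ μ.IsThreeCore :=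
    Set.Finite.mem_toFinset _
  have hcard (k : ℕ) : a3 k = #(cores k) := Set.ncard_eq_toFinset_card _ (finite_isThreeCore k)
  have hpairs : {p : YoungDiagram × YoungDiagram |
      p.1.card + p.2.card = n ∧ p.1.IsThreeCore ∧ p.2.IsThreeCore}
      = (antidiagonal n).biUnion fun k => cores k.1 ×ˢ cores k.2 := by
    ext ⟨μ, ν⟩
    simp [hmem, and_left_comm]
  simp only [hcard, ← card_product]
  rw [← card_biUnion, ← Set.ncard_coe_finset, ← hpairs]
  · rfl
  · rintro ⟨i, j⟩ - ⟨i', j'⟩ - hne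
    refine disjoint_left.2 fun ⟨μ, ν⟩ h h' => hne ?_
    rw [mem_product, hmem, hmem] at h h'
    exact Prod.ext (h.1.1.symm.trans h'.1.1) (h.2.1.symm.trans h'.2.1)

theorem a3_eq_divisorCharSum (n : ℕ) : (a3 n : ℤ) = divisorCharSum χ₃ (3 * n + 1) := by
  rw [a3_eq_ncard_threeCorePairs, EisensteinInt.ncard_threeCorePairs_eq_divisorCharSum]

/-- For every n ≥ 0, 3·A₃(n) = σ(3n+2). -/
theorem three_mul_A3_eq_sigma (n : ℕ) :
    3 * A3 n = ∑ d ∈ (3 * n + 2).divisors, d := by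
  zify
  rw [A3_eq_sum_antidiagonal, ← three_mul_sum_divisorCharSum_three_mul_add_one]
  push_cast
  simp only [a3_eq_divisorCharSum]
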